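/- arXiv:2108.09767 — 2 statements merged into one kernel-verified Lean document; each statement's English description precedes it below -/
import Mathlib

section
/- For any two policies π and π′, any probability distribution d over S, and any integer t ≥ 0, ∥(P^{π′})^t d − (P^π)^t d∥₁ ≤ t·∥π′ − π∥_{∞,1}, where ∥·∥₁ is the total-variation (ℓ₁) norm on ℝ^S and (P^π)^t denotes the t-fold composition of the Markov operator. -/
/-!
For a nonexpansive map `f`, the splitting `f u − g v = (f u − f v) + (f v − g v)` along the orbits
`u`, `v` of a common starting point shows that each step moves the orbits of `f` and `g` apart by
at most the one-step error at `v`. In the `ℓ₁` norm this applies to Markov operators because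
`P^x d` is the linear combination of the rows `P(·|s,a)` with coefficients `x(s,a) d(s)`, so that
`∥P^x d∥₁ ≤ ∥x∥_{∞,1} ∥d∥₁`. Taking `x = π'` gives nonexpansiveness, `x = π` keeps the orbit
bounded, and `x = π' − π` gives the one-step error.
-/

open Finset

noncomputable section

/-- `π` is a stochastic policy: `π s` is a probability distribution over actions. -/
def IsPolicy {S A : Type*} [Fintype A] (π : S → A → ℝ) : Prop :=
  (∀ s a, 0 ≤ π s a) ∧ ∀ s, ∑ a, π s a = 1

/-- `P` is a transition probability model: `P s a` is a distribution over next states. -/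
def IsKernel {S A : Type*} [Fintype S] (P : S → A → S → ℝ) : Prop :=
  (∀ s a s', 0 ≤ P s a s') ∧ ∀ s a, ∑ s', P s a s' = 1

/-- `d` is a probability distribution over states. -/
def IsDist {S : Type*} [Fintype S] (d : S → ℝ) : Prop :=
  (∀ s, 0 ≤ d s) ∧ ∑ s, d s = 1

/-- The Markov operator `P^π` induced by policy `π` acting on distributions over states:
`(P^π d)(s') = ∑_s ∑_a P(s'|s,a)·π(a|s)·d(s)`. -/
def markovStep {S A : Type*} [Fintype S] [Fintype A] (P : S → A → S → ℝ)
    (π : S → A → ℝ) (d : S → ℝ) : S → ℝ :=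
  fun s' => ∑ s, ∑ a, P s a s' * π s a * d s

/-- The discounted state-visitation distribution
`d^π_μ(s) = (1−γ) ∑_{t≥0} γ^t Pr(s_t = s | π, s₀ ∼ μ)`. -/
def visitDist {S A : Type*} [Fintype S] [Fintype A] (P : S → A → S → ℝ) (γ : ℝ)
    (π : S → A → ℝ) (μ : S → ℝ) : S → ℝ :=
  fun s => (1 - γ) * ∑' t : ℕ, γ ^ t * ((markovStep P π)^[t] μ) s

/-- The value function `V^π_μ = E[∑_{t≥0} γ^t r(s_t,a_t)]` with `s₀ ∼ μ`, actions from `π`. -/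
def valueV {S A : Type*} [Fintype S] [Fintype A] (P : S → A → S → ℝ) (r : S → A → ℝ)
    (γ : ℝ) (π : S → A → ℝ) (μ : S → ℝ) : ℝ :=
  ∑' t : ℕ, γ ^ t * ∑ s, ((markovStep P π)^[t] μ) s * ∑ a, π s a * r s a

/-- The state-action value function
`Q^π(s,a) = E[∑_{t≥0} γ^t r(s_t,a_t) | s₀ = s, a₀ = a, actions thereafter from π]`. -/
def valueQ {S A : Type*} [Fintype S] [Fintype A] [DecidableEq S] (P : S → A → S → ℝ)
    (r : S → A → ℝ) (γ : ℝ) (π : S → A → ℝ) (s : S) (a : A) : ℝ :=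
  r s a + γ * ∑ s', P s a s' * valueV P r γ π (fun s'' => if s'' = s' then 1 else 0)

/-- The functional policy gradient `(∇_π V^π_μ)(s,a) = (1/(1−γ))·d^π_μ(s)·Q^π(s,a)`. -/
def gradV {S A : Type*} [Fintype S] [Fintype A] [DecidableEq S] (P : S → A → S → ℝ)
    (r : S → A → ℝ) (γ : ℝ) (π : S → A → ℝ) (μ : S → ℝ) : S → A → ℝ :=
  fun s a => (1 / (1 - γ)) * visitDist P γ π μ s * valueQ P r γ π s a

/-- The pairing `xᵀ y = ∑_{s,a} x(s,a)·y(s,a)` on `ℝ^{S×A}`. -/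
def dotSA {S A : Type*} [Fintype S] [Fintype A] (x y : S → A → ℝ) : ℝ :=
  ∑ s, ∑ a, x s a * y s a

/-- The norm `∥x∥_{∞,1} = max_{s∈S} ∑_{a∈A} |x(s,a)|` on `ℝ^{S×A}`. -/
def normInfOne {S A : Type*} [Fintype S] [Fintype A] [Nonempty S] (x : S → A → ℝ) : ℝ :=
  ⨆ s, ∑ a, |x s a|

/-- The `ℓ₁` (total-variation) norm `∥d∥₁ = ∑_{s∈S} |d s|` on `ℝ^S`. -/
def normL1 {S : Type*} [Fintype S] (d : S → ℝ) : ℝ := ∑ s, |d s|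

lemma map_iterate_sub_iterate_le {F E : Type*} [AddGroup E] [FunLike F E ℝ]
    [AddGroupSeminormClass F E ℝ] (p : F) {f g : E → E} {x : E} {ε : ℝ}
    (hf : ∀ u v, p (f u - f v) ≤ p (u - v))
    (hfg : ∀ k, p (f (g^[k] x) - g (g^[k] x)) ≤ ε) (t : ℕ) :
    p (f^[t] x - g^[t] x) ≤ t * ε := by
  induction t with
  | zero => simp
  | succ t ih =>
    simp only [Function.iterate_succ_apply']
    calc p (f (f^[t] x) - g (g^[t] x))
        ≤ p (f (f^[t] x) - f (g^[t] x)) + p (f (g^[t] x) - g (g^[t] x)) :=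
          le_map_sub_add_map_sub p _ _ _
      _ ≤ t * ε + ε := add_le_add ((hf _ _).trans ih) (hfg t)
      _ = (t + 1 : ℕ) * ε := by push_cast; ring

section Norms

variable {S A : Type*} [Fintype S]

/-- The `ℓ₁` norm `normL1` as a bundled seminorm on `ℝ^S`, giving access to the seminorm API. -/
def normL1Seminorm (S : Type*) [Fintype S] : Seminorm ℝ (S → ℝ) :=
  Seminorm.of normL1
    (fun u v => (sum_le_sum fun s _ => abs_add_le (u s) (v s)).trans_eq sum_add_distrib)
    (fun c u => by simp only [normL1, Pi.smul_apply, smul_eq_mul, abs_mul, mul_sum,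
      Real.norm_eq_abs])

lemma normL1_nonneg (d : S → ℝ) : 0 ≤ normL1 d :=
  apply_nonneg (normL1Seminorm S) d

lemma normL1_smul (c : ℝ) (d : S → ℝ) : normL1 (c • d) = |c| * normL1 d :=
  map_smul_eq_mul (normL1Seminorm S) c d

lemma normL1_sum_le {ι : Type*} (I : Finset ι) (u : ι → S → ℝ) :
    normL1 (∑ i ∈ I, u i) ≤ ∑ i ∈ I, normL1 (u i) :=
  le_sum_of_subadditive (normL1Seminorm S) (map_zero _).le (map_add_le_add _) I u

lemma IsDist.normL1_eq_one {d : S → ℝ} (hd : IsDist d) : normL1 d = 1 := by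
  simpa only [normL1, abs_of_nonneg (hd.1 _)] using hd.2

lemma IsKernel.normL1_le_one {P : S → A → S → ℝ} (hP : IsKernel P) (s : S) (a : A) :
    normL1 (P s a) ≤ 1 :=
  (IsDist.normL1_eq_one ⟨hP.1 s a, hP.2 s a⟩).le

variable [Fintype A] [Nonempty S]

lemma normL1_le_normInfOne (x : S → A → ℝ) (s : S) : normL1 (x s) ≤ normInfOne x :=
  le_ciSup (f := fun s => normL1 (x s)) (Set.finite_range _).bddAbove s

lemma normInfOne_nonneg (x : S → A → ℝ) : 0 ≤ normInfOne x :=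
  Real.iSup_nonneg fun s => normL1_nonneg (x s)

lemma IsPolicy.normInfOne_le_one {π : S → A → ℝ} (hπ : IsPolicy π) : normInfOne π ≤ 1 :=
  ciSup_le fun s => (IsDist.normL1_eq_one ⟨hπ.1 s, hπ.2 s⟩).le

end Norms

section MarkovStep

variable {S A : Type*} [Fintype S] [Fintype A] (P : S → A → S → ℝ)

lemma markovStep_eq_sum_smul (x : S → A → ℝ) (d : S → ℝ) :
    markovStep P x d = ∑ s, ∑ a, (x s a * d s) • P s a := by
  ext s'
  simp only [markovStep, Finset.sum_apply, Pi.smul_apply, smul_eq_mul]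
  exact sum_congr rfl fun s _ => sum_congr rfl fun a _ => by ring

lemma markovStep_sub (x : S → A → ℝ) (u v : S → ℝ) :
    markovStep P x (u - v) = markovStep P x u - markovStep P x v := by
  simp only [markovStep_eq_sum_smul, Pi.sub_apply, mul_sub, sub_smul, sum_sub_distrib]

lemma markovStep_policy_sub (x y : S → A → ℝ) (d : S → ℝ) :
    markovStep P (x - y) d = markovStep P x d - markovStep P y d := by
  simp only [markovStep_eq_sum_smul, Pi.sub_apply, sub_mul, sub_smul, sum_sub_distrib]

variable [Nonempty S] {P} (hP : ∀ s a, normL1 (P s a) ≤ 1)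
include hP

lemma normL1_markovStep_le (x : S → A → ℝ) (d : S → ℝ) :
    normL1 (markovStep P x d) ≤ normInfOne x * normL1 d :=
  calc normL1 (markovStep P x d)
      = normL1 (∑ s, ∑ a, (x s a * d s) • P s a) := by rw [markovStep_eq_sum_smul]
    _ ≤ ∑ s, ∑ a, normL1 ((x s a * d s) • P s a) :=
        (normL1_sum_le _ _).trans (sum_le_sum fun s _ => normL1_sum_le _ _)
    _ ≤ ∑ s, ∑ a, |x s a| * |d s| := by
        refine sum_le_sum fun s _ => sum_le_sum fun a _ => ?_
        rw [normL1_smul, ← abs_mul]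
        exact mul_le_of_le_one_right (abs_nonneg _) (hP s a)
    _ = ∑ s, normL1 (x s) * |d s| := by simp only [normL1, sum_mul]
    _ ≤ ∑ s, normInfOne x * |d s| := sum_le_sum fun s _ =>
        mul_le_mul_of_nonneg_right (normL1_le_normInfOne x s) (abs_nonneg _)
    _ = normInfOne x * normL1 d := (mul_sum _ _ _).symm

lemma normL1_markovStep_le_self {x : S → A → ℝ} (hx : normInfOne x ≤ 1) (d : S → ℝ) :
    normL1 (markovStep P x d) ≤ normL1 d :=
  (normL1_markovStep_le hP x d).trans (mul_le_of_le_one_left (normL1_nonneg d) hx)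

lemma normL1_iterate_markovStep_le_self {x : S → A → ℝ} (hx : normInfOne x ≤ 1) (d : S → ℝ)
    (t : ℕ) : normL1 ((markovStep P x)^[t] d) ≤ normL1 d := by
  induction t with
  | zero => rfl
  | succ t ih =>
    rw [Function.iterate_succ_apply']
    exact (normL1_markovStep_le_self hP hx _).trans ih

end MarkovStep

theorem markov_operator_iterated_general {S A : Type*} [Fintype S] [Fintype A] [Nonempty S]
    (P : S → A → S → ℝ) (hP : ∀ s a, normL1 (P s a) ≤ 1) (π π' : S → A → ℝ)
    (hπ : normInfOne π ≤ 1) (hπ' : normInfOne π' ≤ 1) (d : S → ℝ) (t : ℕ) :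
    normL1 (fun s => (markovStep P π')^[t] d s - (markovStep P π)^[t] d s) ≤
      t * (normInfOne (fun s a => π' s a - π s a) * normL1 d) := by
  have nonexpansive (u v : S → ℝ) :
      normL1 (markovStep P π' u - markovStep P π' v) ≤ normL1 (u - v) := by
    rw [← markovStep_sub]
    exact normL1_markovStep_le_self hP hπ' _
  have one_step_error (k : ℕ) :
      normL1 (markovStep P π' ((markovStep P π)^[k] d) - markovStep P π ((markovStep P π)^[k] d)) ≤
        normInfOne (π' - π) * normL1 d := by
    rw [← markovStep_policy_sub]
    exact (normL1_markovStep_le hP _ _).trans <| mul_le_mul_of_nonneg_left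
      (normL1_iterate_markovStep_le_self hP hπ d k) (normInfOne_nonneg _)
  exact map_iterate_sub_iterate_le (normL1Seminorm S) nonexpansive one_step_error t

/-- **`t`-step bound for iterated Markov operators.**
For any two policies `π, π'`, any distribution `d`, and any `t ≥ 0`,
`∥(P^{π'})^t d − (P^π)^t d∥₁ ≤ t·∥π' − π∥_{∞,1}`. -/
theorem markov_operator_iterated {S A : Type*} [Fintype S] [Fintype A] [Nonempty S]
    [Nonempty A] (P : S → A → S → ℝ) (r : S → A → ℝ) (γ : ℝ) (d₀ : S → ℝ)
    (hP : IsKernel P) (hr : ∀ s a, r s a ∈ Set.Icc (0 : ℝ) 1)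
    (hγ : γ ∈ Set.Ico (0 : ℝ) 1) (hd₀ : IsDist d₀)
    (π π' : S → A → ℝ) (hπ : IsPolicy π) (hπ' : IsPolicy π')
    (d : S → ℝ) (hd : IsDist d) (t : ℕ) :
    normL1 (fun s => (markovStep P π')^[t] d s - (markovStep P π)^[t] d s) ≤
      t * normInfOne (fun s a => π' s a - π s a) := by
  simpa only [hd.normL1_eq_one, mul_one] using
    markov_operator_iterated_general P hP.normL1_le_one π π' hπ.normInfOne_le_one
      hπ'.normInfOne_le_one d t
end
end

section
/- For any two policies π and π′ and any initial state distribution μ over S, |V^{π′}_μ − V^π_μ − (∇_π V^π_μ)ᵀ(π′ − π)| ≤ (1/(1−γ)²)·∥d^{π′}_μ − d^π_μ∥₁·∥π′ − π∥_{∞,1}, where ∥·∥₁ is the total-variation (ℓ₁) norm on ℝ^S. -/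
/-!
Row distributions evolve by the stochastic matrix `P^π`, so summing the geometric series gives
`d^π_μ = (1 - γ) μ (1 - γ P^π)⁻¹` and `V^π_μ = ⟨μ, (1 - γ P^π)⁻¹ r^π⟩`. The resolvent identity
turns `V^{π'}_μ - V^π_μ` into `(1 - γ)⁻¹ ∑ s, d^{π'}_μ(s) ⟨π'(·|s) - π(·|s), Q^π(s, ·)⟩`, the
performance difference lemma. The gradient term is the same expression with `d^π_μ` in place of
`d^{π'}_μ`, so only `d^{π'}_μ - d^π_μ` survives in the remainder, which Hölder's inequality and
`|Q^π| ≤ 1 / (1 - γ)` bound.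
-/

open Finset

noncomputable section

open Matrix

section Holder

variable {ι : Type*} [Fintype ι]

lemma abs_dotProduct_le_normL1_mul (x : ι → ℝ) {y : ι → ℝ} {C : ℝ} (hy : ∀ i, |y i| ≤ C) :
    |x ⬝ᵥ y| ≤ normL1 x * C :=
  calc |∑ i, x i * y i| ≤ ∑ i, |x i * y i| := abs_sum_le_sum_abs _ _
    _ ≤ ∑ i, |x i| * C := sum_le_sum fun i _ => by
        rw [abs_mul]
        exact mul_le_mul_of_nonneg_left (hy i) (abs_nonneg _)
    _ = normL1 x * C := (sum_mul ..).symm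

lemma normL1_eq_one {p : ι → ℝ} (hp₀ : ∀ i, 0 ≤ p i) (hp₁ : ∑ i, p i = 1) : normL1 p = 1 := by
  simp only [normL1, abs_of_nonneg (hp₀ _), hp₁]

lemma normL1_le_normInfOne_s9 {κ : Type*} [Fintype κ] [Nonempty ι] (x : ι → κ → ℝ) (i : ι) :
    normL1 (x i) ≤ normInfOne x :=
  le_ciSup (f := fun i => ∑ j, |x i j|) (Set.finite_range _).bddAbove i

lemma abs_dotProduct_dotProduct_le {κ : Type*} [Fintype κ] [Nonempty ι] (d : ι → ℝ)
    (x : ι → κ → ℝ) {y : ι → κ → ℝ} {C : ℝ} (hC : 0 ≤ C) (hy : ∀ i j, |y i j| ≤ C) :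
    |d ⬝ᵥ fun i => x i ⬝ᵥ y i| ≤ normL1 d * normInfOne x * C := by
  have hinner : ∀ i, |x i ⬝ᵥ y i| ≤ normInfOne x * C := fun i =>
    (abs_dotProduct_le_normL1_mul (x i) (hy i)).trans
      (mul_le_mul_of_nonneg_right (normL1_le_normInfOne_s9 x i) hC)
  exact (abs_dotProduct_le_normL1_mul d hinner).trans_eq (mul_assoc ..).symm

end Holder

section Resolvent

open scoped Matrix.Norms.Operator

variable {n : Type*} [Fintype n] [DecidableEq n]

lemma hasSum_geometric_matrix_of_linftyOpNorm_lt_one {R : Type*} [NormedCommRing R]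
    [CompleteSpace R] {M : Matrix n n R} (hM : ‖M‖ < 1) :
    HasSum (fun t : ℕ => M ^ t) (1 - M)⁻¹ := by
  -- Instance search does not identify the entrywise uniformity with that of the operator norm.
  have : @CompleteSpace (Matrix n n R) PseudoMetricSpace.toUniformSpace :=
    inferInstanceAs (CompleteSpace (n → n → R))
  rw [nonsing_inv_eq_ringInverse, NormedRing.inverse_one_sub M hM]
  exact (summable_geometric_of_norm_lt_one hM).hasSum

variable {M : Matrix n n ℝ} {γ : ℝ}

lemma linftyOpNorm_le_one_of_mem_rowStochastic (hM : M ∈ rowStochastic ℝ n) : ‖M‖ ≤ 1 := by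
  rw [linfty_opNorm_def, NNReal.coe_le_one]
  refine Finset.sup_le fun i _ => ?_
  rw [← NNReal.coe_le_one, NNReal.coe_sum]
  simp only [coe_nnnorm, Real.norm_of_nonneg (nonneg_of_mem_rowStochastic hM),
    sum_row_of_mem_rowStochastic hM, le_refl]

lemma linftyOpNorm_smul_lt_one_of_mem_rowStochastic (hM : M ∈ rowStochastic ℝ n) (hγ : |γ| < 1) :
    ‖γ • M‖ < 1 := by
  rw [norm_smul, Real.norm_eq_abs]
  exact (mul_le_of_le_one_right (abs_nonneg γ)
    (linftyOpNorm_le_one_of_mem_rowStochastic hM)).trans_lt hγ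

lemma isUnit_det_one_sub_smul_of_mem_rowStochastic (hM : M ∈ rowStochastic ℝ n) (hγ : |γ| < 1) :
    IsUnit (1 - γ • M).det :=
  (isUnit_iff_isUnit_det _).1 <|
    isUnit_one_sub_of_norm_lt_one (linftyOpNorm_smul_lt_one_of_mem_rowStochastic hM hγ)

lemma hasSum_discounted_pow_of_mem_rowStochastic (hM : M ∈ rowStochastic ℝ n) (hγ : |γ| < 1) :
    HasSum (fun t : ℕ => γ ^ t • M ^ t) (1 - γ • M)⁻¹ := by
  simpa only [smul_pow] using
    hasSum_geometric_matrix_of_linftyOpNorm_lt_one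
      (linftyOpNorm_smul_lt_one_of_mem_rowStochastic hM hγ)

end Resolvent

section MDP

variable {S A : Type*} [Fintype S] [Fintype A]
  {P : S → A → S → ℝ} {r : S → A → ℝ} {γ R : ℝ} {π π' : S → A → ℝ}

/-- The state-to-state transition matrix `P^π` of the Markov chain induced by `π`, with rows
indexed by the current state, so that distributions are row vectors. -/
def policyMatrix (P : S → A → S → ℝ) (π : S → A → ℝ) : Matrix S S ℝ :=
  of fun s => π s ᵥ* of (P s)

/-- The expected one-step reward `r^π(s) = ∑ a, π(a|s) r(s,a)` under `π`. -/
def policyReward (r : S → A → ℝ) (π : S → A → ℝ) (s : S) : ℝ := π s ⬝ᵥ r s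

lemma policyMatrix_mulVec (v : S → ℝ) (s : S) :
    (policyMatrix P π *ᵥ v) s = π s ⬝ᵥ (of (P s) *ᵥ v) :=
  (dotProduct_mulVec ..).symm

lemma markovStep_eq_vecMul (d : S → ℝ) : markovStep P π d = d ᵥ* policyMatrix P π := by
  ext s'
  simp only [markovStep, policyMatrix, vecMul, dotProduct, of_apply, mul_sum]
  exact sum_congr rfl fun s _ => sum_congr rfl fun a _ => by ring

variable [DecidableEq S]

lemma policyMatrix_mem_rowStochastic (hP : IsKernel P) (hπ : IsPolicy π) :
    policyMatrix P π ∈ rowStochastic ℝ S := by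
  refine mem_rowStochastic.2 ⟨fun s s' => ?_, funext fun s => ?_⟩
  · exact sum_nonneg fun a _ => mul_nonneg (hπ.1 s a) (hP.1 s a s')
  · have hrow : of (P s) *ᵥ 1 = 1 := funext fun a => by simp [mulVec, dotProduct, hP.2 s a]
    rw [policyMatrix_mulVec, hrow, dotProduct_one, hπ.2 s, Pi.one_apply]

lemma iterate_markovStep_eq_vecMul (μ : S → ℝ) (t : ℕ) :
    (markovStep P π)^[t] μ = μ ᵥ* policyMatrix P π ^ t := by
  induction t with
  | zero => simp
  | succ t ih =>
    rw [Function.iterate_succ_apply', ih, markovStep_eq_vecMul, vecMul_vecMul, pow_succ]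

/-- The value `V^π(s)` as a function of the initial state, in the closed form
`V^π = (1 - γ P^π)⁻¹ r^π`. -/
def stateValue (P : S → A → S → ℝ) (r : S → A → ℝ) (γ : ℝ) (π : S → A → ℝ) : S → ℝ :=
  (1 - γ • policyMatrix P π)⁻¹ *ᵥ policyReward r π

lemma hasSum_discounted_iterate_markovStep (hP : IsKernel P) (hγ : |γ| < 1) (hπ : IsPolicy π)
    (μ : S → ℝ) :
    HasSum (fun t : ℕ => γ ^ t • (markovStep P π)^[t] μ)
      (μ ᵥ* (1 - γ • policyMatrix P π)⁻¹) := by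
  have hsum := hasSum_discounted_pow_of_mem_rowStochastic (policyMatrix_mem_rowStochastic hP hπ) hγ
  simpa [Function.comp_def, iterate_markovStep_eq_vecMul, vecMul_smul] using
    hsum.map (vecMulBilin ℝ ℝ μ) (by fun_prop)

lemma visitDist_eq_vecMul_resolvent (hP : IsKernel P) (hγ : |γ| < 1) (hπ : IsPolicy π)
    (μ : S → ℝ) :
    visitDist P γ π μ = (1 - γ) • μ ᵥ* (1 - γ • policyMatrix P π)⁻¹ := by
  ext s
  have hsum := Pi.hasSum.1 (hasSum_discounted_iterate_markovStep hP hγ hπ μ) s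
  exact congrArg ((1 - γ) * ·) hsum.tsum_eq

lemma valueV_eq_dotProduct_stateValue (r : S → A → ℝ) (hP : IsKernel P) (hγ : |γ| < 1)
    (hπ : IsPolicy π) (μ : S → ℝ) :
    valueV P r γ π μ = μ ⬝ᵥ stateValue P r γ π := by
  have hsum := (hasSum_discounted_iterate_markovStep hP hγ hπ μ).map
    ((dotProductBilin ℝ ℝ).flip (policyReward r π)) (by fun_prop)
  rw [stateValue, dotProduct_mulVec]
  simpa [Function.comp_def, valueV, dotProduct, policyReward] using hsum.tsum_eq

lemma valueQ_eq (r : S → A → ℝ) (hP : IsKernel P) (hγ : |γ| < 1) (hπ : IsPolicy π) (s : S) :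
    valueQ P r γ π s = r s + γ • (of (P s) *ᵥ stateValue P r γ π) := by
  ext a
  simp [valueQ, valueV_eq_dotProduct_stateValue r hP hγ hπ, mulVec, dotProduct]

lemma dotProduct_valueQ (r π' : S → A → ℝ) (hP : IsKernel P) (hγ : |γ| < 1) (hπ : IsPolicy π)
    (s : S) :
    π' s ⬝ᵥ valueQ P r γ π s =
      (policyReward r π' + γ • (policyMatrix P π' *ᵥ stateValue P r γ π)) s := by
  rw [valueQ_eq r hP hγ hπ, dotProduct_add, dotProduct_smul, ← policyMatrix_mulVec]
  rfl

lemma stateValue_bellman (r : S → A → ℝ) (hP : IsKernel P) (hγ : |γ| < 1) (hπ : IsPolicy π)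
    (s : S) : stateValue P r γ π s = π s ⬝ᵥ valueQ P r γ π s := by
  have hunit :=
    isUnit_det_one_sub_smul_of_mem_rowStochastic (policyMatrix_mem_rowStochastic hP hπ) hγ
  have hfix : (1 - γ • policyMatrix P π) *ᵥ stateValue P r γ π = policyReward r π := by
    rw [stateValue, mulVec_mulVec, mul_nonsing_inv _ hunit, one_mulVec]
  rw [dotProduct_valueQ r π hP hγ hπ, ← hfix, sub_mulVec, one_mulVec, smul_mulVec,
    sub_add_cancel]

lemma performance_difference (r : S → A → ℝ) (hP : IsKernel P) (hγ : |γ| < 1)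
    (hπ : IsPolicy π) (hπ' : IsPolicy π') (μ : S → ℝ) :
    (1 - γ) * (valueV P r γ π' μ - valueV P r γ π μ) =
      visitDist P γ π' μ ⬝ᵥ fun s => (π' s - π s) ⬝ᵥ valueQ P r γ π s := by
  set M' := policyMatrix P π'
  set U := stateValue P r γ π
  have hunit : IsUnit (1 - γ • M').det :=
    isUnit_det_one_sub_smul_of_mem_rowStochastic (policyMatrix_mem_rowStochastic hP hπ') hγ
  have hadv : (fun s => (π' s - π s) ⬝ᵥ valueQ P r γ π s) =
      policyReward r π' - (1 - γ • M') *ᵥ U := by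
    ext s
    rw [sub_dotProduct, ← stateValue_bellman r hP hγ hπ, dotProduct_valueQ r π' hP hγ hπ,
      sub_mulVec, one_mulVec, smul_mulVec]
    simp only [Pi.add_apply, Pi.sub_apply]
    ring
  have hinv : (1 - γ • M')⁻¹ *ᵥ ((1 - γ • M') *ᵥ U) = U := by
    rw [mulVec_mulVec, nonsing_inv_mul _ hunit, one_mulVec]
  rw [hadv, visitDist_eq_vecMul_resolvent hP hγ hπ', smul_dotProduct, ← dotProduct_mulVec,
    mulVec_sub, hinv, dotProduct_sub, valueV_eq_dotProduct_stateValue r hP hγ hπ',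
    valueV_eq_dotProduct_stateValue r hP hγ hπ, stateValue, smul_eq_mul]

/-- The Bellman equation `Q = r + γ P (π · Q)` averages `Q` twice against probability weights, so
its sup norm satisfies `‖Q‖ ≤ R + |γ| ‖Q‖`. -/
lemma abs_valueQ_le (hP : IsKernel P) (hr : ∀ s a, |r s a| ≤ R) (hγ : |γ| < 1)
    (hπ : IsPolicy π) (s : S) (a : A) : |valueQ P r γ π s a| ≤ R / (1 - |γ|) := by
  set C := ‖valueQ P r γ π‖
  have hQ : ∀ s a, |valueQ P r γ π s a| ≤ C := fun s a =>
    (norm_le_pi_norm _ a).trans (norm_le_pi_norm (valueQ P r γ π) s)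
  have hU : ∀ s, |stateValue P r γ π s| ≤ C := fun s => by
    simpa [stateValue_bellman r hP hγ hπ, normL1_eq_one (hπ.1 s) (hπ.2 s)] using
      abs_dotProduct_le_normL1_mul (π s) (hQ s)
  have hPU : ∀ s a, |(of (P s) *ᵥ stateValue P r γ π) a| ≤ C := fun s a => by
    simpa [normL1_eq_one (hP.1 s a) (hP.2 s a), mulVec] using
      abs_dotProduct_le_normL1_mul (P s a) hU
  have hstep : ∀ s a, |valueQ P r γ π s a| ≤ R + |γ| * C := fun s a => by
    rw [valueQ_eq r hP hγ hπ]
    refine (abs_add_le _ _).trans (add_le_add (hr s a) ?_)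
    rw [Pi.smul_apply, smul_eq_mul, abs_mul]
    exact mul_le_mul_of_nonneg_left (hPU s a) (abs_nonneg γ)
  have hbound : 0 ≤ R + |γ| * C := (abs_nonneg _).trans (hstep s a)
  have hC : C ≤ R + |γ| * C :=
    (pi_norm_le_iff_of_nonneg hbound).2 fun s => (pi_norm_le_iff_of_nonneg hbound).2 (hstep s)
  exact (hQ s a).trans ((le_div_iff₀ (sub_pos.2 hγ)).2 (by linarith))

lemma dotSA_gradV (x : S → A → ℝ) (μ : S → ℝ) :
    dotSA (gradV P r γ π μ) x =
      1 / (1 - γ) * (visitDist P γ π μ ⬝ᵥ fun s => x s ⬝ᵥ valueQ P r γ π s) := by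
  simp only [dotSA, gradV, dotProduct, mul_sum]
  exact sum_congr rfl fun s _ => sum_congr rfl fun a _ => by ring

lemma first_order_remainder_eq (r : S → A → ℝ) (hP : IsKernel P) (hγ : |γ| < 1)
    (hπ : IsPolicy π) (hπ' : IsPolicy π') (μ : S → ℝ) :
    valueV P r γ π' μ - valueV P r γ π μ -
        dotSA (gradV P r γ π μ) (fun s a => π' s a - π s a) =
      1 / (1 - γ) * ((visitDist P γ π' μ - visitDist P γ π μ) ⬝ᵥ
        fun s => (π' s - π s) ⬝ᵥ valueQ P r γ π s) := by
  have hγ_ne : 1 - γ ≠ 0 := (sub_pos.2 (abs_lt.1 hγ).2).ne'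
  rw [sub_dotProduct, mul_sub, ← performance_difference r hP hγ hπ hπ',
    ← mul_assoc, one_div_mul_cancel hγ_ne, one_mul, dotSA_gradV]
  rfl

theorem value_first_order_expansion_general [Nonempty S] (hP : IsKernel P)
    (hr : ∀ s a, |r s a| ≤ R) (hγ : |γ| < 1) (hπ : IsPolicy π) (hπ' : IsPolicy π')
    (μ : S → ℝ) :
    |valueV P r γ π' μ - valueV P r γ π μ -
        dotSA (gradV P r γ π μ) (fun s a => π' s a - π s a)| ≤
      R / ((1 - γ) * (1 - |γ|)) *
        normL1 (fun s => visitDist P γ π' μ s - visitDist P γ π μ s) *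
        normInfOne (fun s a => π' s a - π s a) := by
  have hγ_inv : 0 ≤ 1 / (1 - γ) := (one_div_pos.2 (sub_pos.2 (abs_lt.1 hγ).2)).le
  have hB : 0 ≤ R / (1 - |γ|) := by
    obtain ⟨s⟩ := ‹Nonempty S›
    obtain ⟨a, -, -⟩ := exists_ne_zero_of_sum_ne_zero ((hπ.2 s).trans_ne one_ne_zero)
    exact (abs_nonneg _).trans (abs_valueQ_le hP hr hγ hπ s a)
  rw [first_order_remainder_eq r hP hγ hπ hπ', abs_mul, abs_of_nonneg hγ_inv]
  calc _ ≤ 1 / (1 - γ) * (normL1 (visitDist P γ π' μ - visitDist P γ π μ) *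
          normInfOne (π' - π) * (R / (1 - |γ|))) :=
        mul_le_mul_of_nonneg_left
          (abs_dotProduct_dotProduct_le _ (π' - π) hB (abs_valueQ_le hP hr hγ hπ)) hγ_inv
    _ = R / ((1 - γ) * (1 - |γ|)) * normL1 (visitDist P γ π' μ - visitDist P γ π μ) *
          normInfOne (π' - π) := by
        rw [div_mul_eq_div_div]
        ring

end MDP

/-- **First-order expansion of the value function via the performance difference lemma.**
For any two policies `π, π'` and any initial state distribution `μ`,
`|V^{π'}_μ − V^π_μ − (∇_π V^π_μ)ᵀ(π' − π)| ≤ (1/(1−γ)²)·∥d^{π'}_μ − d^π_μ∥₁·∥π' − π∥_{∞,1}`. -/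
theorem value_first_order_expansion {S A : Type*} [Fintype S] [Fintype A] [Nonempty S]
    [Nonempty A] [DecidableEq S] (P : S → A → S → ℝ) (r : S → A → ℝ) (γ : ℝ) (d₀ : S → ℝ)
    (hP : IsKernel P) (hr : ∀ s a, r s a ∈ Set.Icc (0 : ℝ) 1)
    (hγ : γ ∈ Set.Ico (0 : ℝ) 1) (hd₀ : IsDist d₀)
    (π π' : S → A → ℝ) (hπ : IsPolicy π) (hπ' : IsPolicy π')
    (μ : S → ℝ) (hμ : IsDist μ) :
    |valueV P r γ π' μ - valueV P r γ π μ -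
        dotSA (gradV P r γ π μ) (fun s a => π' s a - π s a)| ≤
      1 / (1 - γ) ^ 2 * normL1 (fun s => visitDist P γ π' μ s - visitDist P γ π μ s) *
        normInfOne (fun s a => π' s a - π s a) := by
  have hr' : ∀ s a, |r s a| ≤ 1 := fun s a => abs_le.2 ⟨by linarith [(hr s a).1], (hr s a).2⟩
  simpa only [abs_of_nonneg hγ.1, ← sq] using
    value_first_order_expansion_general hP hr' (abs_lt.2 ⟨by linarith [hγ.1], hγ.2⟩) hπ hπ' μ
end
end
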